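/- g^5_3(6) = 10; that is, every Gallai-5-coloring of K_{10} contains a set of 6 vertices spanning edges in at most 3 colors, and there exists a Gallai-5-coloring of K_9 in which every set of 6 vertices spans edges in at least 4 colors. -/

import Mathlib

open Finset

/-- A Gallai coloring: a symmetric edge-coloring of the complete graph on `V`
with no rainbow triangle. -/
def IsGallai {V β : Type*} (c : V → V → β) : Prop :=
  (∀ a b, c a b = c b a) ∧
  ∀ a b d : V, a ≠ b → a ≠ d → b ≠ d →
    ¬(c a b ≠ c a d ∧ c a b ≠ c b d ∧ c a d ≠ c b d)

/-- The set of colors appearing on edges inside the vertex set `S`. -/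
def colorsOn {V β : Type*} [DecidableEq V] [DecidableEq β]
    (c : V → V → β) (S : Finset V) : Finset β :=
  ((S ×ˢ S).filter fun p => p.1 ≠ p.2).image fun p => c p.1 p.2

/-- `gallaiNum k q p` is the smallest positive `n` such that every Gallai-`k`-coloring
of `K_n` contains a set of `p` vertices whose induced edges use at most `q` colors. -/
noncomputable def gallaiNum (k q p : ℕ) : ℕ :=
  sInf {n : ℕ | 0 < n ∧ ∀ c : Fin n → Fin n → Fin k, IsGallai c →
    ∃ S : Finset (Fin n), S.card = p ∧ (colorsOn c S).card ≤ q}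


section gallai
set_option linter.unusedSectionVars false
set_option linter.unusedVariables false
variable {V : Type} [DecidableEq V] {c : V → V → Fin 5}

/-- Adjacency inside `A` through a color different from `i` and `j`. -/
def RR (c : V → V → Fin 5) (A : Finset V) (i j : Fin 5) (x y : V) : Prop :=
  x ∈ A ∧ y ∈ A ∧ c x y ≠ i ∧ c x y ≠ j

/-- Connectivity inside `A` through colors different from `i` and `j`. -/
def Cn (c : V → V → Fin 5) (A : Finset V) (i j : Fin 5) : V → V → Prop :=
  Relation.ReflTransGen (RR c A i j)

theorem Cn.symm' (hs : ∀ a b, c a b = c b a) {A : Finset V} {i j : Fin 5} {x y : V}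
    (h : Cn c A i j x y) : Cn c A i j y x := by
  induction h with
  | refl => exact Relation.ReflTransGen.refl
  | @tail a b _ hd ih =>
    obtain ⟨h1, h2, h3, h4⟩ := hd
    exact Relation.ReflTransGen.head ⟨h2, h1, by rwa [hs b a], by rwa [hs b a]⟩ ih

theorem cn_cross {A : Finset V} {i j : Fin 5} {x y : V} (hx : x ∈ A) (hy : y ∈ A)
    (h : ¬ Cn c A i j x y) : c x y = i ∨ c x y = j := by
  by_contra hc
  push Not at hc
  exact h (Relation.ReflTransGen.single ⟨hx, hy, hc.1, hc.2⟩)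

theorem cn_homog (hG : IsGallai c) {A : Finset V} {i j : Fin 5} {x y x' : V}
    (hx : x ∈ A) (hy : y ∈ A) (h : ¬ Cn c A i j x y) (hc : Cn c A i j x x') :
    c x' y = c x y := by
  induction hc with
  | refl => rfl
  | @tail b d hb hd ih =>
    have nb : ¬ Cn c A i j b y := fun q => h (Relation.ReflTransGen.trans hb q)
    have nd : ¬ Cn c A i j d y := fun q => h ((Relation.ReflTransGen.tail hb hd).trans q)
    obtain ⟨h1, h2, h3, h4⟩ := hd
    have e1 := cn_cross h1 hy nb
    have e2 := cn_cross h2 hy nd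
    by_cases hbd : b = d
    · subst hbd; exact ih
    have hby : b ≠ y := by rintro rfl; exact nb Relation.ReflTransGen.refl
    have hdy : d ≠ y := by rintro rfl; exact nd Relation.ReflTransGen.refl
    have := hG.2 b d y hbd hby hdy
    rw [← ih]
    by_contra hne
    refine this ⟨?_, ?_, fun q => hne q.symm⟩
    · rcases e1 with e | e <;> rw [e] <;> assumption
    · rcases e2 with e | e <;> rw [e] <;> assumption

theorem cn_isolated {A : Finset V} {i j : Fin 5} {v u : V}
    (h : ∀ z ∈ A, z ≠ v → c v z = i ∨ c v z = j) (hu : u ≠ v) : ¬ Cn c A i j v u := by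
  intro hc
  apply hu
  clear hu
  induction hc with
  | refl => rfl
  | @tail b d hb hd ih =>
    subst ih
    by_contra hne
    rcases h d hd.2.1 hne with e | e
    · exact hd.2.2.1 e
    · exact hd.2.2.2 e

theorem gallai_disc (hG : IsGallai c) (A : Finset V) (hA : 2 ≤ A.card) :
    ∃ i j, ∃ x ∈ A, ∃ y ∈ A, ¬ Cn c A i j x y := by
  induction A using Finset.induction_on with
  | empty => simp at hA
  | @insert v A hv ih =>
    have hs := hG.1
    rw [Finset.card_insert_of_notMem hv] at hA
    by_cases h1 : A.card = 1
    · obtain ⟨u, rfl⟩ := Finset.card_eq_one.1 h1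
      have huv : u ≠ v := by rintro rfl; simp at hv
      refine ⟨c v u, c v u, v, by simp, u, by simp, cn_isolated ?_ huv⟩
      intro z hz hzv
      have : z = u := by simpa [hzv] using hz
      simp [this]
    obtain ⟨i, j, x, hx, y, hy, hxy⟩ := ih (by omega)
    have nev : ∀ z ∈ A, z ≠ v := by rintro z hz rfl; exact hv hz
    by_cases h : ∃ z ∈ A, ∀ z' ∈ A, Cn c A i j z z' → (c v z' = i ∨ c v z' = j)
    · obtain ⟨z, hz, hzz⟩ := h
      refine ⟨i, j, z, by simp [hz], v, by simp, ?_⟩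
      intro hc
      have key : ∀ t, Cn c (insert v A) i j z t → t ∈ A ∧ Cn c A i j z t := by
        intro t ht
        induction ht with
        | refl => exact ⟨hz, Relation.ReflTransGen.refl⟩
        | @tail b d hb hd ih =>
          have hdv : d ≠ v := by
            rintro rfl
            have := hzz b ih.1 ih.2
            rw [hs] at this
            rcases this with e | e
            · exact hd.2.2.1 e
            · exact hd.2.2.2 e
          have hdA : d ∈ A := by simpa [hdv] using hd.2.1
          exact ⟨hdA, Relation.ReflTransGen.tail ih.2 ⟨ih.1, hdA, hd.2.2⟩⟩
      exact hv (key v hc).1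
    push Not at h
    have cross : ∀ z ∈ A, ∀ w ∈ A, ¬ Cn c A i j z w → z ≠ w := by
      rintro z hz w hw hn rfl
      exact hn Relation.ReflTransGen.refl
    have E1 : ∀ z ∈ A, ∀ w ∈ A, ¬ Cn c A i j z w → c v z ≠ i → c v z ≠ j → c v w ≠ i →
        c v w ≠ j → c v z = c v w := by
      intro z hz w hw hn a1 a2 a3 a4
      by_contra hne
      refine hG.2 v z w (nev z hz).symm (nev w hw).symm (cross z hz w hw hn) ⟨hne, ?_, ?_⟩
      · rcases cn_cross hz hw hn with e | e <;> rw [e] <;> assumption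
      · rcases cn_cross hz hw hn with e | e <;> rw [e] <;> assumption
    have E2 : ∀ u ∈ A, ∀ t ∈ A, ¬ Cn c A i j u t → (c v u = i ∨ c v u = j) → c v t ≠ i →
        c v t ≠ j → c u t = c v u := by
      intro u hu t ht hn a1 a2 a3
      by_contra hne
      refine hG.2 v u t (nev u hu).symm (nev t ht).symm (cross u hu t ht hn)
        ⟨?_, fun q => hne q.symm, ?_⟩
      · rcases a1 with e | e <;> rw [e] <;> exact Ne.symm ‹_›
      · rcases cn_cross hu ht hn with e | e <;> rw [e] <;> assumption
    obtain ⟨x', hx', xx', x1, x2⟩ := h x hx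
    obtain ⟨y', hy', yy', y1, y2⟩ := h y hy
    have hn' : ¬ Cn c A i j x' y' := fun q =>
      hxy ((Relation.ReflTransGen.trans xx' q).trans (Cn.symm' hs yy'))
    have other : ∀ z ∈ A, ∃ t ∈ A, ¬ Cn c A i j z t ∧ c v t ≠ i ∧ c v t ≠ j ∧ c v t = c v x' := by
      intro z hz
      by_cases hzx : Cn c A i j z x'
      · refine ⟨y', hy', fun q => hn' ((Cn.symm' hs hzx).trans q), y1, y2, ?_⟩
        exact (E1 x' hx' y' hy' hn' x1 x2 y1 y2).symm
      · exact ⟨x', hx', hzx, x1, x2, rfl⟩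
    have E3 : ∀ z ∈ A, c v z = i ∨ c v z = j ∨ c v z = c v x' := by
      intro z hz
      by_contra hc
      push Not at hc
      obtain ⟨t, ht, hzt, t1, t2, t3⟩ := other z hz
      exact hc.2.2 ((E1 z hz t ht hzt hc.1 hc.2.1 t1 t2).trans t3)
    have E4 : ∀ u ∈ A, ∀ w ∈ A, c v u = i → c v w = j → i = j := by
      intro u hu w hw e1 e2
      by_cases huw : Cn c A i j u w
      · obtain ⟨t, ht, hut, t1, t2, -⟩ := other u hu
        have hwt : ¬ Cn c A i j w t := fun q => hut (Relation.ReflTransGen.trans huw q)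
        have a1 := E2 u hu t ht hut (Or.inl e1) t1 t2
        have a2 := E2 w hw t ht hwt (Or.inr e2) t1 t2
        have a3 := cn_homog hG hu ht hut huw
        rw [← e1, ← e2, ← a1, ← a2, a3]
      · obtain ⟨w', hw', ww', w1, w2⟩ := h w hw
        obtain ⟨u', hu', uu', u1, u2⟩ := h u hu
        have n1 : ¬ Cn c A i j u w' := fun q =>
          huw (Relation.ReflTransGen.trans q (Cn.symm' hs ww'))
        have n2 : ¬ Cn c A i j w u := fun q => huw (Cn.symm' hs q)
        have n3 : ¬ Cn c A i j w u' := fun q =>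
          n2 (Relation.ReflTransGen.trans q (Cn.symm' hs uu'))
        have a1 := E2 u hu w' hw' n1 (Or.inl e1) w1 w2
        have a2 := E2 w hw u' hu' n3 (Or.inr e2) u1 u2
        have a3 := cn_homog hG hw hu n2 ww'
        have a4 := cn_homog hG hu hw huw uu'
        rw [← e1, ← e2, ← a1, ← a2, hs u w', a3, hs w u', a4, hs]
    by_cases hi : ∃ u ∈ A, c v u = i
    · obtain ⟨u, hu, e1⟩ := hi
      refine ⟨i, c v x', v, by simp, x, by simp [hx], cn_isolated ?_ (nev x hx)⟩
      intro z hz hzv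
      have hzA : z ∈ A := by simpa [hzv] using hz
      rcases E3 z hzA with e | e | e
      · exact Or.inl e
      · exact Or.inl (e.trans (E4 u hu z hzA e1 e).symm)
      · exact Or.inr e
    · refine ⟨j, c v x', v, by simp, x, by simp [hx], cn_isolated ?_ (nev x hx)⟩
      intro z hz hzv
      have hzA : z ∈ A := by simpa [hzv] using hz
      rcases E3 z hzA with e | e | e
      · exact absurd ⟨z, hzA, e⟩ hi
      · exact Or.inl e
      · exact Or.inr e

/-- A monochromatic cut of `A`. -/
def MonoCut (c : V → V → Fin 5) (A : Finset V) : Prop :=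
  ∃ X Y : Finset V, ∃ x : Fin 5, X.Nonempty ∧ Y.Nonempty ∧ Disjoint X Y ∧ X ∪ Y = A ∧
    ∀ a ∈ X, ∀ b ∈ Y, c a b = x

/-- `X` is completely joined in color `i` to some vertex of `A` outside of `X`. -/
def HasNbr (c : V → V → Fin 5) (A X : Finset V) (i : Fin 5) : Prop :=
  ∃ p ∈ A, p ∉ X ∧ ∀ q ∈ X, c q p = i

/-- A partition of `A` into at least four blocks. -/
def Quad (c : V → V → Fin 5) (A : Finset V) (i j : Fin 5) : Prop :=
  ∃ X Y Z W : Finset V, X.Nonempty ∧ Y.Nonempty ∧ Z.Nonempty ∧ W.Nonempty ∧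
    Disjoint X Y ∧ Disjoint (X ∪ Y) Z ∧ Disjoint (X ∪ Y ∪ Z) W ∧ X ∪ Y ∪ Z ∪ W = A ∧
    (∀ a ∈ X, ∀ b ∈ Y, c a b = i ∨ c a b = j) ∧
    (∀ a ∈ X ∪ Y, ∀ b ∈ Z, c a b = i ∨ c a b = j) ∧
    (∀ a ∈ X ∪ Y ∪ Z, ∀ b ∈ W, c a b = i ∨ c a b = j) ∧
    HasNbr c A X i ∧ HasNbr c A Y i ∧ HasNbr c A Z i ∧
    HasNbr c A X j ∧ HasNbr c A Y j ∧ HasNbr c A Z j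

set_option maxHeartbeats 1000000 in
theorem dichotomy (hG : IsGallai c) (A : Finset V) (hA : 2 ≤ A.card) :
    MonoCut c A ∨ ∃ i j, i ≠ j ∧ Quad c A i j := by
  classical
  by_cases hM : MonoCut c A
  · exact Or.inl hM
  right
  have hs := hG.1
  obtain ⟨i, j, x, hx, y, hy, hxy⟩ := gallai_disc hG A hA
  obtain ⟨F, memF⟩ : ∃ F : V → Finset V, ∀ z t, t ∈ F z ↔ t ∈ A ∧ Cn c A i j z t :=
    ⟨fun z => A.filter fun t => Cn c A i j z t, by simp⟩
  have selfF : ∀ z ∈ A, z ∈ F z := fun z hz => (memF z z).2 ⟨hz, Relation.ReflTransGen.refl⟩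
  have outF : ∀ z ∈ A, ∀ a ∈ F z, ∀ b ∈ A, b ∉ F z → ¬ Cn c A i j a b := by
    intro z hz a ha b hb hbz q
    exact hbz ((memF z b).2 ⟨hb, Relation.ReflTransGen.trans ((memF z a).1 ha).2 q⟩)
  have hom : ∀ z ∈ A, ∀ a ∈ F z, ∀ a' ∈ F z, ∀ b ∈ A, b ∉ F z → c a b = c a' b := by
    intro z hz a ha a' ha' b hb hbz
    have h0 := outF z hz z (selfF z hz) b hb hbz
    rw [cn_homog hG hz hb h0 ((memF z a).1 ha).2, cn_homog hG hz hb h0 ((memF z a').1 ha').2]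
  have crossF : ∀ z ∈ A, ∀ a ∈ F z, ∀ b ∈ A, b ∉ F z → c a b = i ∨ c a b = j := by
    intro z hz a ha b hb hbz
    exact cn_cross ((memF z a).1 ha).1 hb (outF z hz a ha b hb hbz)
  have ne : ∀ z ∈ A, ∃ t ∈ A, t ∉ F z := by
    intro z hz
    by_cases h : Cn c A i j z x
    · refine ⟨y, hy, fun q => hxy ?_⟩
      exact (Cn.symm' hs h).trans ((memF z y).1 q).2
    · exact ⟨x, hx, fun q => h ((memF z x).1 q).2⟩
  have cut : ∀ z ∈ A, ∀ k : Fin 5, ∃ b ∈ A, b ∉ F z ∧ c z b ≠ k := by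
    intro z hz k
    by_contra hc
    push Not at hc
    refine hM ⟨F z, A \ F z, k, ⟨z, selfF z hz⟩, ?_, Finset.disjoint_sdiff, ?_, ?_⟩
    · obtain ⟨t, h1, h2⟩ := ne z hz
      exact ⟨t, by simp [h1, h2]⟩
    · exact Finset.union_sdiff_of_subset fun t ht => ((memF z t).1 ht).1
    · intro a ha b hb
      rw [Finset.mem_sdiff] at hb
      rw [hom z hz a ha z (selfF z hz) b hb.1 hb.2]
      exact hc b hb.1 hb.2
  have nbi : ∀ z ∈ A, HasNbr c A (F z) i := by
    intro z hz
    obtain ⟨b, h1, h2, h3⟩ := cut z hz j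
    refine ⟨b, h1, h2, fun q hq => ?_⟩
    rw [hom z hz q hq z (selfF z hz) b h1 h2]
    exact (crossF z hz z (selfF z hz) b h1 h2).resolve_right h3
  have nbj : ∀ z ∈ A, HasNbr c A (F z) j := by
    intro z hz
    obtain ⟨b, h1, h2, h3⟩ := cut z hz i
    refine ⟨b, h1, h2, fun q hq => ?_⟩
    rw [hom z hz q hq z (selfF z hz) b h1 h2]
    exact (crossF z hz z (selfF z hz) b h1 h2).resolve_left h3
  have disj : ∀ a ∈ A, ∀ b ∈ A, b ∉ F a → ∀ t ∈ F b, t ∉ F a := by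
    intro a ha b hb hab t ht hta
    exact hab ((memF a b).2 ⟨hb, Relation.ReflTransGen.trans ((memF a t).1 hta).2
      (Cn.symm' hs ((memF b t).1 ht).2)⟩)
  have ndsymm : ∀ a ∈ A, ∀ b ∈ A, b ∉ F a → a ∉ F b := by
    intro a ha b hb hab q
    exact hab ((memF a b).2 ⟨hb, Cn.symm' hs ((memF b a).1 q).2⟩)
  have homr : ∀ a ∈ A, ∀ b ∈ A, b ∉ F a → ∀ t ∈ F b, c a t = c a b := by
    intro a ha b hb hab t ht
    rw [hs a t, hs a b]
    exact hom b hb t ht b (selfF b hb) a ha (ndsymm a ha b hb hab)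
  have hyx : y ∉ F x := fun q => hxy ((memF x y).1 q).2
  have hxy' := ndsymm x hx y hy hyx
  obtain ⟨z, hz, hzx, hzy⟩ : ∃ z ∈ A, z ∉ F x ∧ z ∉ F y := by
    by_contra hc
    push Not at hc
    obtain ⟨b, h1, h2, h3⟩ := cut x hx (c x y)
    exact h3 (homr x hx y hy hyx b (hc b h1 h2))
  have hxz := ndsymm x hx z hz hzx
  have hyz := ndsymm y hy z hz hzy
  obtain ⟨w, hw, hwx, hwy, hwz⟩ : ∃ w ∈ A, w ∉ F x ∧ w ∉ F y ∧ w ∉ F z := by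
    by_contra hc
    push Not at hc
    have gen : ∀ p ∈ A, ∀ q ∈ A, ∀ r ∈ A, q ∉ F p → r ∉ F p → c p q = c p r →
        (∀ t ∈ A, t ∉ F p → t ∈ F q ∨ t ∈ F r) → False := by
      intro p hp q hq r hr h1 h2 h3 h4
      obtain ⟨b, b1, b2, b3⟩ := cut p hp (c p q)
      rcases h4 b b1 b2 with h | h
      · exact b3 (homr p hp q hq h1 b h)
      · exact b3 ((homr p hp r hr h2 b h).trans h3.symm)
    have n1 : c x y ≠ c x z := fun e => gen x hx y hy z hz hyx hzx e (by
      intro t ht htx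
      by_cases h : t ∈ F y
      · exact Or.inl h
      · exact Or.inr (hc t ht htx h))
    have n2 : c y x ≠ c y z := fun e => gen y hy x hx z hz hxy' hzy e (by
      intro t ht hty
      by_cases h : t ∈ F x
      · exact Or.inl h
      · exact Or.inr (hc t ht h hty))
    have n3 : c z x ≠ c z y := fun e => gen z hz x hx y hy hxz hyz e (by
      intro t ht htz
      by_contra h
      push Not at h
      exact htz (hc t ht h.1 h.2))
    have a1 := crossF x hx x (selfF x hx) y hy hyx
    have a2 := crossF x hx x (selfF x hx) z hz hzx
    have a3 := crossF y hy y (selfF y hy) z hz hzy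
    rw [hs y x] at n2
    rw [hs z x, hs z y] at n3
    rcases a1 with e1 | e1 <;> rcases a2 with e2 | e2 <;> rcases a3 with e3 | e3 <;>
      first
        | exact n1 (e1.trans e2.symm)
        | exact n2 (e1.trans e3.symm)
        | exact n3 (e2.trans e3.symm)
  refine ⟨i, j, ?_, F x, F y, F z, A \ (F x ∪ F y ∪ F z), ⟨x, selfF x hx⟩, ⟨y, selfF y hy⟩,
    ⟨z, selfF z hz⟩, ⟨w, by simp [hw, hwx, hwy, hwz]⟩, ?_, ?_, Finset.disjoint_sdiff, ?_, ?_, ?_,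
    ?_, nbi x hx, nbi y hy, nbi z hz, nbj x hx, nbj y hy, nbj z hz⟩
  · rintro rfl
    obtain ⟨b, b1, b2, b3⟩ := cut x hx i
    have := crossF x hx x (selfF x hx) b b1 b2
    tauto
  · rw [Finset.disjoint_left]
    exact fun t h1 h2 => disj x hx y hy hyx t h2 h1
  · rw [Finset.disjoint_left]
    intro t h1 h2
    rcases Finset.mem_union.1 h1 with h | h
    · exact disj x hx z hz hzx t h2 h
    · exact disj y hy z hz hzy t h2 h
  · apply Finset.union_sdiff_of_subset
    intro t ht
    simp only [Finset.mem_union, memF] at ht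
    tauto
  · intro a ha b hb
    exact crossF x hx a ha b ((memF y b).1 hb).1 (disj x hx y hy hyx b hb)
  · intro a ha b hb
    have hbA := ((memF z b).1 hb).1
    rcases Finset.mem_union.1 ha with h | h
    · exact crossF x hx a h b hbA (disj x hx z hz hzx b hb)
    · exact crossF y hy a h b hbA (disj y hy z hz hzy b hb)
  · intro a ha b hb
    simp only [Finset.mem_sdiff, Finset.mem_union, not_or] at hb
    simp only [Finset.mem_union] at ha
    rcases ha with (h | h) | h
    · exact crossF x hx a h b hb.1 hb.2.1.1
    · exact crossF y hy a h b hb.1 hb.2.1.2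
    · exact crossF z hz a h b hb.1 hb.2.2

end gallai
def L1 : List ℕ :=
  [nat_lit 36319351833633]

def L2 : List ℕ :=
  [nat_lit 36319386470466, nat_lit 37454296942658, nat_lit 71539158484002,
   nat_lit 72604342879297, nat_lit 72637629892641]

def L3 : List ℕ :=
  [nat_lit 37454331579491, nat_lit 71539193120835, nat_lit 72674103593027,
   nat_lit 72604377516130, nat_lit 73739287988322, nat_lit 72637664529474,
   nat_lit 73772575001666, nat_lit 107824149529666, nat_lit 107857436543010,
   nat_lit 108922620938305, nat_lit 36319421107299, nat_lit 38589242051683,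
   nat_lit 106758965134371, nat_lit 108889333924961, nat_lit 108955907951649]

def L4 : List ℕ :=
  [nat_lit 37454331580548, nat_lit 71539194202180, nat_lit 72709537073220,
   nat_lit 72604411103362, nat_lit 74839873357954, nat_lit 72637699133506,
   nat_lit 74906446368834, nat_lit 143009595393090, nat_lit 143076169418786,
   nat_lit 145206538209345, nat_lit 72638704749668, nat_lit 72638737255555,
   nat_lit 72638738272355, nat_lit 72638738335843, nat_lit 73774722517091,
   nat_lit 72638739352643, nat_lit 73808008514627, nat_lit 72638771858530,
   nat_lit 74873160404066, nat_lit 143042882406466, nat_lit 36319455744132,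
   nat_lit 39724187160708, nat_lit 72674137148516, nat_lit 72674138228804,
   nat_lit 141978771784740, nat_lit 73739289037955, nat_lit 73772575035491,
   nat_lit 107824150612035, nat_lit 107857437624387, nat_lit 107859583010883,
   nat_lit 107892870023235, nat_lit 73739322624130, nat_lit 107824183117922,
   nat_lit 108922654525538, nat_lit 108924734900322, nat_lit 110023206307938,
   nat_lit 73772609638466, nat_lit 107857471147074, nat_lit 108922655542338,
   nat_lit 108991307910210, nat_lit 110056492305474, nat_lit 144108066801730,
   nat_lit 144141353814082, nat_lit 145174324970625, nat_lit 145274186010657]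

def L5 : List ℕ :=
  [nat_lit 72638703669381, nat_lit 72638703669412, nat_lit 72638703670404,
   nat_lit 72638705862724, nat_lit 72638706878532, nat_lit 72710644369476,
   nat_lit 72743930366020, nat_lit 72638804396162, nat_lit 75939386034306,
   nat_lit 178193967482946, nat_lit 37454331581605, nat_lit 71539195283525,
   nat_lit 72744970553413, nat_lit 72604444690594, nat_lit 75940458727586,
   nat_lit 72637733737538, nat_lit 76040317736002, nat_lit 178195041256514,
   nat_lit 178294902294562, nat_lit 181490455480385, nat_lit 72638705829957,
   nat_lit 72638770841762, nat_lit 72638770874498, nat_lit 74840948148354,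
   nat_lit 72638772876354, nat_lit 72638773923906, nat_lit 72638806429762,
   nat_lit 74940806139970, nat_lit 76005958029378, nat_lit 178260541507650,
   nat_lit 72709570627653, nat_lit 74839874406562, nat_lit 74906446402626,
   nat_lit 143009595426882, nat_lit 143010669135938, nat_lit 143076170467394,
   nat_lit 143110529157186, nat_lit 145206571763778, nat_lit 146306049837122,
   nat_lit 180390910298178, nat_lit 72674171817092, nat_lit 73774723599492,
   nat_lit 72674172833892, nat_lit 73808009597028, nat_lit 107859584093284,
   nat_lit 107892871105636, nat_lit 73739357229187, nat_lit 74873193992323,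
   nat_lit 108924768488579, nat_lit 110023239896195, nat_lit 108991342514275,
   nat_lit 110056526909539, nat_lit 107824218770531, nat_lit 110092966005859,
   nat_lit 143042917042275, nat_lit 144108101437539, nat_lit 144177827514467,
   nat_lit 145243011909731, nat_lit 144141388450883, nat_lit 145276298923075,
   nat_lit 36319490380965, nat_lit 40859132269733, nat_lit 177198578435109,
   nat_lit 73739323706500, nat_lit 73774756105348, nat_lit 73772610719844,
   nat_lit 73808043118692, nat_lit 107859617646692, nat_lit 107892904660036,
   nat_lit 73772643225731, nat_lit 74873195008131, nat_lit 108924769536131,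
   nat_lit 107857504767075, nat_lit 110092967021667, nat_lit 108991342547011,
   nat_lit 143042917043267, nat_lit 144177827515459, nat_lit 110023240944770,
   nat_lit 110056526942306, nat_lit 144108101438562, nat_lit 144141388450914,
   nat_lit 145243011910754, nat_lit 145276298923106, nat_lit 181459316016289,
   nat_lit 181592464069665, nat_lit 107824184167556, nat_lit 108959094639748,
   nat_lit 107857471180900, nat_lit 108992381653092, nat_lit 108959095720036,
   nat_lit 108992382733380, nat_lit 108922655576195, nat_lit 110057566048387,
   nat_lit 108959128225923, nat_lit 108922656656483, nat_lit 110092999527523,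
   nat_lit 108992416256067, nat_lit 144142428670019, nat_lit 144177861068867,
   nat_lit 110057599634562, nat_lit 110057600651362, nat_lit 144142461175906,
   nat_lit 145243012958306, nat_lit 144142462192706, nat_lit 145276298955842]

def L6 : List ℕ :=
  [nat_lit 72674138230949, nat_lit 72674138231941, nat_lit 107824185247845,
   nat_lit 108994528118885, nat_lit 107857472261189, nat_lit 109027815132229,
   nat_lit 73739322627236, nat_lit 107824186296420, nat_lit 109028887857252,
   nat_lit 73739356245155, nat_lit 73772645291107, nat_lit 73772677796963,
   nat_lit 107857539338307, nat_lit 111225764646979, nat_lit 108922689162402,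
   nat_lit 111158151416994, nat_lit 108922689195138, nat_lit 111159225158786,
   nat_lit 179327873484866, nat_lit 179328947193922, nat_lit 74840981736611,
   nat_lit 74940840744035, nat_lit 76005992633443, nat_lit 143010703771747,
   nat_lit 143110563793987, nat_lit 178260576144451, nat_lit 179395486616643,
   nat_lit 146306084473954, nat_lit 180390944935010, nat_lit 181525855407202,
   nat_lit 108958090137732, nat_lit 110093000609924, nat_lit 144177862151268,
   nat_lit 145243046546563, nat_lit 145276333559907, nat_lit 72674139343973,
   nat_lit 72674140359781, nat_lit 73739389766819, nat_lit 110059680008355,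
   nat_lit 107824251308163, nat_lit 111159191636099, nat_lit 110126253020227,
   nat_lit 111191437415522, nat_lit 180459666477122, nat_lit 181593503240258,
   nat_lit 72638772973733, nat_lit 73739322626213, nat_lit 74909667627173,
   nat_lit 72638773990533, nat_lit 73772609639557, nat_lit 74942953624709,
   nat_lit 107859584094341, nat_lit 107892871106693, nat_lit 73774724680837,
   nat_lit 72709605297285, nat_lit 73808010678373, nat_lit 72709606314085,
   nat_lit 72710645451877, nat_lit 72743931448421, nat_lit 143079390742597,
   nat_lit 143112677754949, nat_lit 72638806496420, nat_lit 73772609639588,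
   nat_lit 76008105514148, nat_lit 108924768489636, nat_lit 110023239897252,
   nat_lit 74839909076132, nat_lit 73774789692580, nat_lit 108991342515332,
   nat_lit 110056526910596, nat_lit 72638807576708, nat_lit 76043538993284,
   nat_lit 143009630030980, nat_lit 144144540503172, nat_lit 108924770617476,
   nat_lit 107859651233924, nat_lit 110059681089668, nat_lit 108994561706116,
   nat_lit 74906482087012, nat_lit 73808077722724, nat_lit 143076204056676,
   nat_lit 144211114528868, nat_lit 144108102518884, nat_lit 145278445389924,
   nat_lit 108991343628356, nat_lit 107892939264068, nat_lit 110126254100548,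
   nat_lit 109027849736260, nat_lit 107857472293956, nat_lit 144141389532228,
   nat_lit 145311732403268, nat_lit 109028888874052, nat_lit 178262690138180,
   nat_lit 178298122537028, nat_lit 74873227579555, nat_lit 74839942598819,
   nat_lit 75939419622563, nat_lit 107824217753763, nat_lit 74906514592899,
   nat_lit 74873229612163, nat_lit 145206572847235, nat_lit 146341483319427,
   nat_lit 143042950629507, nat_lit 145278412884099, nat_lit 143009664633955,
   nat_lit 143076237642851, nat_lit 145206573927523, nat_lit 145278411869283,
   nat_lit 145311699897443, nat_lit 146376916798563, nat_lit 178194002118755,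
   nat_lit 144144540534883, nat_lit 179328912590947, nat_lit 107857505784899,
   nat_lit 143042951647299, nat_lit 145311698882627, nat_lit 144211115576387,
   nat_lit 180426345941059, nat_lit 180461778339907, nat_lit 145209759533218,
   nat_lit 146308230940834, nat_lit 110056560529538, nat_lit 110023275548802,
   nat_lit 111191471001730, nat_lit 111158186020994, nat_lit 144141422038146,
   nat_lit 146376884292738, nat_lit 180393091434626, nat_lit 181493643217026,
   nat_lit 108922690180194, nat_lit 144108136042594, nat_lit 108922691227746,
   nat_lit 146376883277922, nat_lit 111225797152866, nat_lit 146341516872802,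
   nat_lit 179361194051682, nat_lit 180461745834082, nat_lit 145309620573250,
   nat_lit 146374804968514, nat_lit 179327908056130, nat_lit 180461744819266,
   nat_lit 179361161513026, nat_lit 179395520202818, nat_lit 180426378414146,
   nat_lit 181525856487490, nat_lit 74873196122244, nat_lit 143042917044356,
   nat_lit 73808076738692, nat_lit 144108101439620, nat_lit 74907554812036,
   nat_lit 73774791757956, nat_lit 144141388451972, nat_lit 74874269831300,
   nat_lit 73809150447748, nat_lit 144177827516548, nat_lit 145243011911812,
   nat_lit 145276298924164, nat_lit 107892938247300, nat_lit 110023242026116,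
   nat_lit 143077276781700, nat_lit 145207613066372, nat_lit 110092968103044,
   nat_lit 144177828564100, nat_lit 110093033114756, nat_lit 145243045465220,
   nat_lit 107859652251748, nat_lit 110056528023652, nat_lit 143043990786148,
   nat_lit 110092967088228, nat_lit 144177827549284, nat_lit 145240900079716,
   nat_lit 110093034131556, nat_lit 145276332478564, nat_lit 107894011989092,
   nat_lit 110092968135780, nat_lit 145243014039652, nat_lit 144177894656100,
   nat_lit 145243046545508, nat_lit 145276300037188, nat_lit 144177895672900,
   nat_lit 145276333558852, nat_lit 108924804141187, nat_lit 108991376134275,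
   nat_lit 144109175181443, nat_lit 110092999594115, nat_lit 145243011944579,
   nat_lit 144175748190339, nat_lit 110093001625731, nat_lit 145276299972739,
   nat_lit 110024315767939, nat_lit 110093033147523, nat_lit 144177862150275,
   nat_lit 145243014039683, nat_lit 144177894656131, nat_lit 110090887762019,
   nat_lit 110093035180131, nat_lit 144177862152259, nat_lit 145276300038211,
   nat_lit 144177895673923, nat_lit 145276332543106, nat_lit 145243047562370,
   nat_lit 145276333558914, nat_lit 145243046547554, nat_lit 145276332544098,
   nat_lit 145243047563362, nat_lit 107824149532837, nat_lit 107857436546181,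
   nat_lit 73739291232357, nat_lit 72710677956709, nat_lit 73772578245701,
   nat_lit 72743964970053, nat_lit 108922620941476, nat_lit 108922624182340,
   nat_lit 109028921378884, nat_lit 72674204354723, nat_lit 74840949229731,
   nat_lit 143010669169763, nat_lit 143110530206819, nat_lit 146306083392611,
   nat_lit 74940807222339, nat_lit 72674207405123, nat_lit 180390944933955,
   nat_lit 181525855406147, nat_lit 73772675763362, nat_lit 75939420638370,
   nat_lit 107857537304706, nat_lit 111159192651906, nat_lit 76005991617634,
   nat_lit 73739391800418, nat_lit 178260576143458, nat_lit 179395486615650,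
   nat_lit 107824253341762, nat_lit 111225763631170, nat_lit 178194002119746,
   nat_lit 179328912591938]

def L7 : List ℕ :=
  [nat_lit 73773683414181, nat_lit 179328947226723, nat_lit 108957050967139,
   nat_lit 107858546035813, nat_lit 109028888906853, nat_lit 108923762936995,
   nat_lit 111159225191587, nat_lit 111225798202467, nat_lit 179395521252419,
   nat_lit 181525890042978, nat_lit 143009595396261, nat_lit 143076169421957,
   nat_lit 74839876601989, nat_lit 72710711543941, nat_lit 74906449612869,
   nat_lit 72743999574085, nat_lit 145206538212516, nat_lit 145206541453380,
   nat_lit 145312838649924, nat_lit 74906547130530, nat_lit 75939455242402,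
   nat_lit 143076270180482, nat_lit 146377925527682, nat_lit 178194036723778,
   nat_lit 180462783959106, nat_lit 110091961504900, nat_lit 144176823013508,
   nat_lit 145242007408772, nat_lit 145311733485700, nat_lit 146376917880964,
   nat_lit 180461779422308, nat_lit 72709637834916, nat_lit 74840950311076,
   nat_lit 143010669170820, nat_lit 72709640885316, nat_lit 74839977170050,
   nat_lit 143009699205186, nat_lit 146411209494594, nat_lit 180461779422339,
   nat_lit 74940808303684, nat_lit 76006025204866, nat_lit 108993523617925,
   nat_lit 110058675507364, nat_lit 144143536001156, nat_lit 145278446473348,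
   nat_lit 143110530207876, nat_lit 146306083393668, nat_lit 180390946015300,
   nat_lit 181561288886340, nat_lit 178260609730690, nat_lit 180496071985282,
   nat_lit 72674241057957, nat_lit 73739392947365, nat_lit 107824253408421,
   nat_lit 73772678943909, nat_lit 107857539404965, nat_lit 108922691294373,
   nat_lit 76043540075685, nat_lit 76043572581541, nat_lit 111227911115941,
   nat_lit 76043573597349, nat_lit 111227912131749, nat_lit 111227944637605,
   nat_lit 110093001691269, nat_lit 178298123619429, nat_lit 178298157172837,
   nat_lit 179397635246181, nat_lit 178298157173829, nat_lit 179397635247173,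
   nat_lit 179397668800581, nat_lit 110093034197156, nat_lit 110093035213956,
   nat_lit 144177895738500, nat_lit 145278447520900, nat_lit 144177896755300,
   nat_lit 145311733518436, nat_lit 181493676805283, nat_lit 181493677852835,
   nat_lit 181528036542627, nat_lit 145243081150595, nat_lit 146376917913731,
   nat_lit 181593537844323, nat_lit 181593537877059, nat_lit 181594611586115,
   nat_lit 181493677853858, nat_lit 181528036543650, nat_lit 181528037591202,
   nat_lit 181593537877090, nat_lit 181594611586146, nat_lit 181594611618882,
   nat_lit 108959130357925, nat_lit 108959162863781, nat_lit 108992449876133,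
   nat_lit 110057601765541, nat_lit 108994562756773, nat_lit 110059714646181,
   nat_lit 110093001658533, nat_lit 143077243195557, nat_lit 110093034164389,
   nat_lit 145207611986085, nat_lit 108959163911333, nat_lit 110094074383525,
   nat_lit 108992417371269, nat_lit 108959163880581, nat_lit 110057601766533,
   nat_lit 110093000643717, nat_lit 143043956184197, nat_lit 108992450892933,
   nat_lit 109027849770117, nat_lit 110126287656069, nat_lit 110093034165381,
   nat_lit 145240898999429, nat_lit 108992449908869, nat_lit 144142462259333,
   nat_lit 108959164928133, nat_lit 144142463275141, nat_lit 144177862152325,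
   nat_lit 110127360381061, nat_lit 110094075400325, nat_lit 145278446440581,
   nat_lit 145311732437125, nat_lit 108994563837061, nat_lit 144144576187525,
   nat_lit 144178934877317, nat_lit 144177863199877, nat_lit 74874237357189,
   nat_lit 144212221889669, nat_lit 72743998590085, nat_lit 108992450925669,
   nat_lit 110127361397861, nat_lit 144177862185061, nat_lit 74907522338917,
   nat_lit 109027850850405, nat_lit 144211149197413, nat_lit 144178935894117,
   nat_lit 144212222906469, nat_lit 72710713610341, nat_lit 144177895738469,
   nat_lit 144177896754277, nat_lit 145278447520869, nat_lit 145311733517413,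
   nat_lit 145207614146661, nat_lit 145278478944357, nat_lit 145240901160005,
   nat_lit 145311765957701, nat_lit 108959163880612, nat_lit 108992449877156,
   nat_lit 110057634272420, nat_lit 110093000643748, nat_lit 144109140579492,
   nat_lit 110057635288228, nat_lit 110093001659556, nat_lit 111158186054820,
   nat_lit 111191472051364, nat_lit 144175714604196, nat_lit 110057601798308,
   nat_lit 144142462259364, nat_lit 108959197434020, nat_lit 144142495781028,
   nat_lit 145243046547620, nat_lit 111192512270500, nat_lit 110094107906212,
   nat_lit 145278446440612, nat_lit 146376884326564, nat_lit 110059748232356,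
   nat_lit 144144608693412, nat_lit 145244086766756, nat_lit 75939421752484,
   nat_lit 145243080101028, nat_lit 146342558174372, nat_lit 73809182985380,
   nat_lit 110057602815108, nat_lit 144142463276164, nat_lit 108992483431556,
   nat_lit 144142495782020, nat_lit 145276333560964, nat_lit 111192513287300,
   nat_lit 110127393903748, nat_lit 145311732438148, nat_lit 146376884327556,
   nat_lit 108959164960900, nat_lit 108992450957444, nat_lit 108959197466756,
   nat_lit 110057635352708, nat_lit 178194002120836, nat_lit 108992484479108,
   nat_lit 110057636368516, nat_lit 110128434122884, nat_lit 111193586012292,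
   nat_lit 179328912593028, nat_lit 178260576145540, nat_lit 110128435138692,
   nat_lit 111226873024644, nat_lit 180390944936068, nat_lit 111193619533956,
   nat_lit 111226905530500, nat_lit 179395486617732, nat_lit 181525855408260,
   nat_lit 144142496861316, nat_lit 144177863232644, nat_lit 145243047627908,
   nat_lit 179362234272900, nat_lit 145243080133764, nat_lit 180427418668164,
   nat_lit 144213295631492, nat_lit 179363307981956, nat_lit 145278480026756,
   nat_lit 146343631916164, nat_lit 180428492377220, nat_lit 146412317805700,
   nat_lit 110024283293828, nat_lit 107894044526724, nat_lit 111159193766020,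
   nat_lit 109028954998916, nat_lit 76005993747556, nat_lit 110126322259044,
   nat_lit 144211182720100, nat_lit 145310660793444, nat_lit 145276367115364,
   nat_lit 146375845188708, nat_lit 73809185018980, nat_lit 144142496862308,
   nat_lit 144177863233636, nat_lit 145276334641252, nat_lit 179362235289700,
   nat_lit 144213295632484, nat_lit 179396593979492, nat_lit 145276368162916,
   nat_lit 180460706697316, nat_lit 145311767040100, nat_lit 146410204926052,
   nat_lit 180495065387108, nat_lit 146412317806692, nat_lit 179327909137508,
   nat_lit 179361195134052, nat_lit 144178969480292, nat_lit 145278447553636,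
   nat_lit 180461745900644, nat_lit 144212256492644, nat_lit 145311734565988,
   nat_lit 180461746916452, nat_lit 146306085555300, nat_lit 179363341536356,
   nat_lit 179396627532900, nat_lit 180497178299492, nat_lit 180497179315300,
   nat_lit 146376950352996, nat_lit 110090855288900, nat_lit 111225765761092,
   nat_lit 107894046560324, nat_lit 109028957032516, nat_lit 181525857568836,
   nat_lit 180461811894340, nat_lit 110057635320995, nat_lit 111192545793187,
   nat_lit 145243046580387, nat_lit 74907587350691, nat_lit 111158219640995,
   nat_lit 146341517988003, nat_lit 145244120289443, nat_lit 74841017389219,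
   nat_lit 146342591697059, nat_lit 145243047627939, nat_lit 145243081149603,
   nat_lit 145278480026787, nat_lit 146376917912739, nat_lit 143077310367907,
   nat_lit 145278413932707, nat_lit 74940874364035, nat_lit 145276334609539,
   nat_lit 111191506654339, nat_lit 146341519004803, nat_lit 145310693299331,
   nat_lit 146375877694595, nat_lit 74874304402563, nat_lit 144142496862339,
   nat_lit 145243080134787, nat_lit 145276367147139, nat_lit 180427452190851,
   nat_lit 146343631917187, nat_lit 181526930264195, nat_lit 145276368162947,
   nat_lit 180460739203203, nat_lit 146376918929539, nat_lit 146410204926083,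
   nat_lit 181560217276547, nat_lit 146412317806723, nat_lit 179327941643395,
   nat_lit 180426379529347, nat_lit 145244121369731, nat_lit 145278480059523,
   nat_lit 180461778406531, nat_lit 143110597381251, nat_lit 146342592777347,
   nat_lit 180428493425795, nat_lit 181526931311747, nat_lit 146376951467139,
   nat_lit 180461811928195, nat_lit 181562330188931, nat_lit 181562363710595,
   nat_lit 145311700946051, nat_lit 145276334642275, nat_lit 145276367148131,
   nat_lit 145311767041123, nat_lit 146376918930531, nat_lit 143010738376803,
   nat_lit 145278411903075, nat_lit 179361228656739, nat_lit 180426380546147,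
   nat_lit 145310694379619, nat_lit 146375878774883, nat_lit 180461779423331,
   nat_lit 180495065419875, nat_lit 181560217309283, nat_lit 145311768088675,
   nat_lit 180461780439139, nat_lit 146376952483939, nat_lit 180461812944995,
   nat_lit 181595617202275, nat_lit 181595649708131, nat_lit 179362268875875,
   nat_lit 180427453271139, nat_lit 180460740283491, nat_lit 180497179348067,
   nat_lit 181562363743331, nat_lit 181595650755683, nat_lit 143044025390147,
   nat_lit 145311698916419, nat_lit 144175781776546, nat_lit 146376885341346,
   nat_lit 110090920300674, nat_lit 111225830772866, nat_lit 110024350339202,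
   nat_lit 111159260811394, nat_lit 179395553790082, nat_lit 180461746882690,
   nat_lit 144109209785442, nat_lit 146376883311714, nat_lit 180461744853058,
   nat_lit 179328981798978, nat_lit 143042882409637, nat_lit 144108066804901,
   nat_lit 144141353817253, nat_lit 74873163648101, nat_lit 72745072299109,
   nat_lit 110023209551973, nat_lit 109028954966117, nat_lit 110056495549509,
   nat_lit 109028955982917, nat_lit 181490456562788, nat_lit 181525888961636,
   nat_lit 181525890041924, nat_lit 73808109276323, nat_lit 75940495461539,
   nat_lit 107892970784931, nat_lit 111159193733283, nat_lit 178294935882883,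
   nat_lit 179395487665283, nat_lit 76040352437347, nat_lit 73774826329187,
   nat_lit 178195075862627, nat_lit 179328912625763, nat_lit 111225764713539,
   nat_lit 107859686822979, nat_lit 108991408671906, nat_lit 111159227255970,
   nat_lit 179395521251458, nat_lit 111225797219426, nat_lit 108924838712418,
   nat_lit 179328947228738]

def L8 : List ℕ :=
  [nat_lit 144143501366437, nat_lit 179395521253508, nat_lit 108993556155556,
   nat_lit 109028957065317, nat_lit 181525890044036, nat_lit 110058643033221,
   nat_lit 111225799316580, nat_lit 111159260844195, nat_lit 144143570572387,
   nat_lit 180462818594915, nat_lit 145241974934629, nat_lit 145312839732325,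
   nat_lit 110091994042531, nat_lit 146377959115939, nat_lit 179395554839683,
   nat_lit 144176788378789, nat_lit 179328947228804, nat_lit 108993558189156,
   nat_lit 181525891124324, nat_lit 111225831822467, nat_lit 145241972774053,
   nat_lit 109028956048517, nat_lit 110091929030757, nat_lit 111159227321508,
   nat_lit 181561323523172, nat_lit 144176855551139, nat_lit 110058710078595,
   nat_lit 180496106622083, nat_lit 146411244098659, nat_lit 179328981831779,
   nat_lit 145277440888965, nat_lit 145277408383140, nat_lit 145277407368324,
   nat_lit 146376918962309, nat_lit 145311767072932, nat_lit 145278481077380,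
   nat_lit 180461779423365, nat_lit 145311767105668, nat_lit 145278482124932,
   nat_lit 180461779423396, nat_lit 146376918995076, nat_lit 145278514630788,
   nat_lit 108993523651749, nat_lit 110058675541157, nat_lit 108993524667557,
   nat_lit 110091962553509, nat_lit 110058709062821, nat_lit 110091995059365,
   nat_lit 110094075434149, nat_lit 110127361430693, nat_lit 110094107940005,
   nat_lit 111192545825957, nat_lit 110127394952357, nat_lit 111192546841765,
   nat_lit 108993524699301, nat_lit 144143537049765, nat_lit 110058709094565,
   nat_lit 144143569555621, nat_lit 144143570571429, nat_lit 110091996106917,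
   nat_lit 110128435171493, nat_lit 111193619566757, nat_lit 145312806211749,
   nat_lit 146377958101157, nat_lit 146411244097701, nat_lit 111226906579109,
   nat_lit 108993524700293, nat_lit 144176823047301, nat_lit 110058709095557,
   nat_lit 144176855553157, nat_lit 110091996107909, nat_lit 144176856568965,
   nat_lit 110128435172485, nat_lit 111193619567749, nat_lit 111226906580101,
   nat_lit 145312807228549, nat_lit 146377959117957, nat_lit 146411245114501,
   nat_lit 144143570604165, nat_lit 144176856600709, nat_lit 144178936975493,
   nat_lit 144212222972037, nat_lit 144213295665285, nat_lit 144213296681093,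
   nat_lit 146412317839493, nat_lit 146412318855301, nat_lit 144178970528901,
   nat_lit 179362268875909, nat_lit 179363341569157, nat_lit 145312807292037,
   nat_lit 180462819642501, nat_lit 180496105639045, nat_lit 179363342584965,
   nat_lit 180497179348101, nat_lit 144212256526437, nat_lit 179362268876901,
   nat_lit 179396627566693, nat_lit 179396628582501, nat_lit 145312808308837,
   nat_lit 180462820659301, nat_lit 180496106655845, nat_lit 180497179349093,
   nat_lit 108993524700324, nat_lit 145241974936740, nat_lit 110058709095588,
   nat_lit 145242007442596, nat_lit 110091996107940, nat_lit 145242008458404,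
   nat_lit 110128435172516, nat_lit 111193619567780, nat_lit 111226906580132,
   nat_lit 145312839734436, nat_lit 146377991623844, nat_lit 146411277620388,
   nat_lit 144143570604196, nat_lit 145242008490148, nat_lit 145244153876644,
   nat_lit 146342591762596, nat_lit 146343631949988, nat_lit 146343665471652,
   nat_lit 146412317839524, nat_lit 146412351361188, nat_lit 145244154924196,
   nat_lit 180427453271204, nat_lit 180428493458596, nat_lit 146377991687332,
   nat_lit 180462852148388, nat_lit 181561290034340, nat_lit 180428526980260,
   nat_lit 181562363743396, nat_lit 144176856601732, nat_lit 145242008491140,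
   nat_lit 180461779424388, nat_lit 145310727902340, nat_lit 146375879791748,
   nat_lit 146410205975684, nat_lit 146410238481540, nat_lit 146412318856324,
   nat_lit 146412351362180, nat_lit 144213296713860, nat_lit 146343665504388,
   nat_lit 146376920010884, nat_lit 145311800627332, nat_lit 146410239529092,
   nat_lit 179363342617732, nat_lit 180428527012996, nat_lit 180497179380868,
   nat_lit 181562363776132, nat_lit 145310727935076, nat_lit 180460740285540,
   nat_lit 180495066469476, nat_lit 180495098975332, nat_lit 146411279717476,
   nat_lit 180496140178532, nat_lit 181561292067940, nat_lit 181595650757732,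
   nat_lit 179396628615268, nat_lit 180495100022884, nat_lit 180497180397668,
   nat_lit 181595651805284, nat_lit 145312841895012, nat_lit 180462854245476,
   nat_lit 180496140242020, nat_lit 180497212935268, nat_lit 180497213951076,
   nat_lit 146342592811171, nat_lit 180427453272227, nat_lit 181526931345571,
   nat_lit 181526964867235, nat_lit 146378025210019, nat_lit 180462885671075,
   nat_lit 181561323557027, nat_lit 181562363744419, nat_lit 146375879824515,
   nat_lit 180460740285571, nat_lit 181560218358915, nat_lit 181560250864771,
   nat_lit 146411312223363, nat_lit 180496172684419, nat_lit 181561324573827,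
   nat_lit 181595650757763, nat_lit 181526964899971, nat_lit 181560251912323,
   nat_lit 181562397298819, nat_lit 181595684311171, nat_lit 146378026290307,
   nat_lit 180462886751363, nat_lit 181561324637315, nat_lit 181562364824707,
   nat_lit 181562398346371, nat_lit 146411313303651, nat_lit 180496173764707,
   nat_lit 181561325654115, nat_lit 181595651838051, nat_lit 181595684343907,
   nat_lit 179362234241189, nat_lit 180427418636453, nat_lit 179362234242181,
   nat_lit 180460705649797, nat_lit 111192513351813, nat_lit 111192514367621,
   nat_lit 108994630914181, nat_lit 109027916910725, nat_lit 146341519036549,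
   nat_lit 180426379497605, nat_lit 146376951435397, nat_lit 181561289969797,
   nat_lit 146342559255685, nat_lit 145278513581189, nat_lit 146375846269029,
   nat_lit 145311800594533, nat_lit 180461812976741, nat_lit 181561291050085,
   nat_lit 180427418637476, nat_lit 180460705649828, nat_lit 110127393968292,
   nat_lit 110059750297764, nat_lit 111158188183716, nat_lit 144211182751908,
   nat_lit 179361195102372, nat_lit 110127427489956, nat_lit 145311734534308,
   nat_lit 180496105574564, nat_lit 144212255476900, nat_lit 145278448569508,
   nat_lit 144144609744004, nat_lit 179327908091012, nat_lit 110126321276036,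
   nat_lit 111191473165444, nat_lit 145278446507140, nat_lit 180462818563204,
   nat_lit 110094110004356, nat_lit 110094142510212, nat_lit 146342560304260,
   nat_lit 144212289031300, nat_lit 146377960197252, nat_lit 145312873319556,
   nat_lit 145311733552228, nat_lit 144178970498148, nat_lit 146375846301796,
   nat_lit 146411245178980, nat_lit 144179004051556, nat_lit 145312874336356,
   nat_lit 145310726885539, nat_lit 146376919978147, nat_lit 180461780470947,
   nat_lit 180496139160739, nat_lit 146376917947523, nat_lit 145244154893443,
   nat_lit 145310726918275, nat_lit 146411277684867, nat_lit 145244155940995,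
   nat_lit 146377993719939, nat_lit 180461779457123, nat_lit 180462853166179,
   nat_lit 143009595430053, nat_lit 143010669139109, nat_lit 178193967486117,
   nat_lit 143076170470565, nat_lit 143110529160357, nat_lit 178260541510821,
   nat_lit 145206571766949, nat_lit 146306049840293, nat_lit 180390910301349,
   nat_lit 74839877650597, nat_lit 72709671389349, nat_lit 75940461938853,
   nat_lit 72745071282341, nat_lit 178195041259653, nat_lit 178294902296709,
   nat_lit 181490455482501, nat_lit 74840951392389, nat_lit 75939389278341,
   nat_lit 72745071315077, nat_lit 72745104836741, nat_lit 74906449646661,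
   nat_lit 76040319931461, nat_lit 72709674439749, nat_lit 72745073316933,
   nat_lit 74940809384005, nat_lit 76005961273413, nat_lit 72745074364485,
   nat_lit 72745106870341, nat_lit 145206575007813, nat_lit 146306053081157,
   nat_lit 180390913542213, nat_lit 181490457643077, nat_lit 145312872204357,
   nat_lit 181561322440773, nat_lit 146412350277701, nat_lit 180497210738757,
   nat_lit 178195041259684, nat_lit 178294902296740, nat_lit 181490455482532,
   nat_lit 75940461971620, nat_lit 72710745131172, nat_lit 72744031127716,
   nat_lit 75940462987428, nat_lit 178195041260676, nat_lit 178294902297732,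
   nat_lit 181490455483524, nat_lit 76040319964228, nat_lit 76040320980036,
   nat_lit 72710748181572, nat_lit 72744034178116, nat_lit 181490457675844,
   nat_lit 181490458691652, nat_lit 181562396182596, nat_lit 181595682179140,
   nat_lit 74906547164322, nat_lit 76040384943266, nat_lit 74839978218658,
   nat_lit 75940528985250, nat_lit 74940906901666, nat_lit 76006058791074,
   nat_lit 75940530032802, nat_lit 75940562538658, nat_lit 143076271229090,
   nat_lit 143110629918882, nat_lit 178260642269346, nat_lit 178294969469090,
   nat_lit 146377926576290, nat_lit 180496073033890, nat_lit 146412285266082,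
   nat_lit 181562297616546, nat_lit 76040384976002, nat_lit 76040418497666,
   nat_lit 74841051960450, nat_lit 75939489846402, nat_lit 178294969501826,
   nat_lit 178295003023490, nat_lit 180497146775682, nat_lit 181595584661634,
   nat_lit 143009699238978, nat_lit 178195110466626, nat_lit 180462783992898,
   nat_lit 146411209528386, nat_lit 143010772948034, nat_lit 178194071295042,
   nat_lit 146412283237442, nat_lit 181595581584450, nat_lit 178195111514178,
   nat_lit 178195144020034, nat_lit 180497143730242, nat_lit 181562295619650]

def L9 : List ℕ :=
  [nat_lit 145277441971365, nat_lit 146412352443557, nat_lit 180497213984901,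
   nat_lit 181562398380196, nat_lit 181595685393540, nat_lit 179327873488037,
   nat_lit 179361161516197, nat_lit 180426378417317, nat_lit 111158154661029,
   nat_lit 109027915893925, nat_lit 111191440659557, nat_lit 108994631930981,
   nat_lit 146341520116837, nat_lit 146412384914533, nat_lit 110126353781923,
   nat_lit 110059783820451, nat_lit 144211216338083, nat_lit 146412319902883,
   nat_lit 144144644346979, nat_lit 146412317873251, nat_lit 179328947197093,
   nat_lit 179395520205989, nat_lit 181525856490661, nat_lit 179395521253541,
   nat_lit 181525890044069, nat_lit 111159228370085, nat_lit 109028989602981,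
   nat_lit 179328947229829, nat_lit 181525890045061, nat_lit 111159228402821,
   nat_lit 109028989635717, nat_lit 111225799349349, nat_lit 109028990620773,
   nat_lit 111225800396901, nat_lit 109028991668325, nat_lit 181525858651237,
   nat_lit 181525891157093, nat_lit 181525892172901, nat_lit 180497245375589,
   nat_lit 181562397264997, nat_lit 181595683261541, nat_lit 179328947229860,
   nat_lit 179395521254564, nat_lit 111159228402852, nat_lit 109028989635748,
   nat_lit 111225800397924, nat_lit 109028991669348, nat_lit 111225831855267,
   nat_lit 111159261893795, nat_lit 111225865408675, nat_lit 111159295447203,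
   nat_lit 179395554872483, nat_lit 179395587378339, nat_lit 179395588394147,
   nat_lit 180497180363939, nat_lit 181562332253347, nat_lit 181595618249891,
   nat_lit 111225865409667, nat_lit 111159295448195, nat_lit 179328982881379,
   nat_lit 179329015387235, nat_lit 180497178334307, nat_lit 181562330223715,
   nat_lit 181595616220259, nat_lit 179329016403043]


def Lst : ℕ → List ℕ
  | 1 => L1
  | 2 => L2
  | 3 => L3
  | 4 => L4
  | 5 => L5
  | 6 => L6
  | 7 => L7
  | 8 => L8
  | 9 => L9
  | _ => []

/-- The index set of the ten triples of colors. -/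
def K : List ℕ := [nat_lit 0, nat_lit 5, nat_lit 10, nat_lit 15, nat_lit 20,
  nat_lit 25, nat_lit 30, nat_lit 35, nat_lit 40, nat_lit 45]

/-- `inT k x`: color `x` belongs to the `k`-th triple. -/
def inT (k x : ℕ) : Bool := Nat.testBit (nat_lit 1014521528765799) (Nat.add k x)

/-- The `k`-th entry of a packed vector. -/
def dg (l k : ℕ) : ℕ := Nat.land (Nat.shiftRight l k) (nat_lit 31)

/-- `List.all` through the recursor, which the kernel evaluates quickly. -/
noncomputable def allR {α : Type} (p : α → Bool) (l : List α) : Bool :=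
  List.rec (motive := fun _ => Bool) true (fun a _ ih => Bool.rec false ih (p a)) l

/-- `List.any` through the recursor. -/
noncomputable def anyR {α : Type} (p : α → Bool) (l : List α) : Bool :=
  List.rec (motive := fun _ => Bool) false (fun a _ ih => Bool.rec ih true (p a)) l

/-- Lazy disjunction. -/
noncomputable def orR (a b : Bool) : Bool := Bool.rec b true a

/-- Lazy conjunction. -/
noncomputable def andR (a b : Bool) : Bool := Bool.rec false b a

/-- Evaluate the number `n` before passing it on. -/
noncomputable def force {α : Type} (n : ℕ) (f : ℕ → α) : α :=
  Nat.rec (motive := fun _ => α) (f 0) (fun m _ => f (Nat.succ m)) n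

noncomputable def pack (w : ℕ → ℕ) (l : List ℕ) : ℕ :=
  List.rec (motive := fun _ => ℕ) 0
    (fun k _ ih => Nat.add (Nat.shiftLeft (w k) k) ih) l

noncomputable def quick (P l : ℕ) : Bool :=
  Nat.beq (Nat.land (Nat.sub P l) (nat_lit 290554814669064)) (nat_lit 290554814669064)

noncomputable def final (n : ℕ) (w : ℕ → ℕ) : Bool :=
  orR (anyR (fun k => Nat.ble (nat_lit 6) (w k)) K) <|
    force (Nat.add (pack w K) (nat_lit 290554814669064)) fun P =>
      anyR (fun l => andR (quick P l) (allR (fun k => Nat.ble (dg l k) (w k)) K)) (Lst n)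

def ks : ℕ → List ℕ
  | 0 => [nat_lit 25, nat_lit 20, nat_lit 15, nat_lit 10, nat_lit 5, nat_lit 0]
  | 1 => [nat_lit 40, nat_lit 35, nat_lit 30, nat_lit 10, nat_lit 5, nat_lit 0]
  | 2 => [nat_lit 45, nat_lit 35, nat_lit 30, nat_lit 20, nat_lit 15, nat_lit 0]
  | 3 => [nat_lit 45, nat_lit 40, nat_lit 30, nat_lit 25, nat_lit 15, nat_lit 5]
  | 4 => [nat_lit 45, nat_lit 40, nat_lit 35, nat_lit 25, nat_lit 20, nat_lit 10]
  | _ => []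

noncomputable def mx (a b : ℕ) : ℕ := Bool.rec a b (Nat.ble a b)

noncomputable def joinW (u v x k : ℕ) : ℕ :=
  Bool.rec (mx (dg u k) (dg v k)) (Nat.add (dg u k) (dg v k)) (inT k x)

noncomputable def joinOK (n u v x : ℕ) : Bool :=
  orR (anyR (fun k => Nat.ble (nat_lit 6) (Nat.add (dg u k) (dg v k))) (ks x)) (final n (joinW u v x))

noncomputable def joinAll (n a b : ℕ) : Bool :=
  allR (fun u => allR (fun v => allR (fun x => joinOK n u v x) [nat_lit 0, nat_lit 1, nat_lit 2, nat_lit 3, nat_lit 4]) (Lst b)) (Lst a)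

def kk (i j : ℕ) : List ℕ := K.filter fun k => inT k i && inT k j

noncomputable def consIf (b : Bool) (x : ℕ × ℕ) (l : List (ℕ × ℕ)) : List (ℕ × ℕ) :=
  Bool.rec l (x :: l) b

/-- All vectors of `Lst n` whose entries on the triples in `q` are at most two. -/
noncomputable def tagged (q : List ℕ) (n : ℕ) (acc : List (ℕ × ℕ)) : List (ℕ × ℕ) :=
  List.rec (motive := fun _ => List (ℕ × ℕ)) acc
    (fun l _ ih => consIf (allR (fun k => Nat.ble (dg l k) (nat_lit 2)) q) (n, l) ih) (Lst n)

noncomputable def small (q : List ℕ) : List (ℕ × ℕ) :=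
  tagged q 1 <| tagged q 2 <| tagged q 3 <| tagged q 4 <| tagged q 5 <| tagged q 6 <|
    tagged q 7 <| tagged q 8 <| tagged q 9 []

noncomputable def quadW (i j x y z t k : ℕ) : ℕ :=
  Bool.rec
    (Bool.rec
      (mx (mx (mx (dg x k) (dg y k)) (dg z k)) (dg t k))
      (mx (Nat.succ (mx (mx (dg x k) (dg y k)) (dg z k))) (dg t k))
      (inT k j))
    (Bool.rec
      (mx (Nat.succ (mx (mx (dg x k) (dg y k)) (dg z k))) (dg t k))
      (Nat.add (Nat.add (Nat.add (dg x k) (dg y k)) (dg z k)) (dg t k))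
      (inT k j))
    (inT k i)

noncomputable def quadOK (i j : ℕ) (q : List ℕ) (x y z t : ℕ × ℕ) : Bool :=
  orR (anyR (fun k => Nat.ble (nat_lit 6) (Nat.add (Nat.add (Nat.add
    (dg x.2 k) (dg y.2 k)) (dg z.2 k)) (dg t.2 k))) q) <|
  orR (Nat.ble (nat_lit 11) (x.1 + y.1 + z.1 + t.1)) <|
    final (x.1 + y.1 + z.1 + t.1) (quadW i j x.2 y.2 z.2 t.2)

noncomputable def quadL (i j : ℕ) (q : List ℕ) (S : List (ℕ × ℕ)) : Bool :=
  allR (fun x => allR (fun y =>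
    orR (anyR (fun k => Nat.ble (nat_lit 4) (Nat.add (dg x.2 k) (dg y.2 k))) q) <|
    allR (fun z =>
      orR (anyR (fun k => Nat.ble (nat_lit 5) (Nat.add (Nat.add (dg x.2 k) (dg y.2 k)) (dg z.2 k))) q) <|
      allR (fun t => quadOK i j q x y z t) S) S) S) S

noncomputable def quadAll (i j : ℕ) : Bool := quadL i j (kk i j) (small (kk i j))

set_option maxRecDepth 100000

theorem join_check_a : allR (fun n => allR (fun a => joinAll n a (n - a)) (List.range' 1 (n / 2)))
    [2, 3, 4, 5, 6, 7] = true := by decide +kernel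

theorem join_check_b : allR (fun n => allR (fun a => joinAll n a (n - a)) (List.range' 1 (n / 2)))
    [8, 9, 10] = true := by decide +kernel

theorem quad_check : allR (fun p : ℕ × ℕ => quadAll p.1 p.2)
    [(0, 1), (0, 2), (0, 3), (0, 4), (1, 2), (1, 3), (1, 4), (2, 3), (2, 4), (3, 4)] = true := by
  decide +kernel

theorem allR_iff {α : Type} (p : α → Bool) (l : List α) :
    allR p l = true ↔ ∀ a ∈ l, p a = true := by
  induction l with
  | nil => simp [allR]
  | cons a t ih =>
    have h : allR p (a :: t) = (Bool.rec false (allR p t) (p a) : Bool) := rfl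
    rw [h]
    cases hp : p a <;> simp [hp, ih]

theorem anyR_iff {α : Type} (p : α → Bool) (l : List α) :
    anyR p l = true ↔ ∃ a ∈ l, p a = true := by
  induction l with
  | nil => simp [anyR]
  | cons a t ih =>
    have h : anyR p (a :: t) = (Bool.rec (anyR p t) true (p a) : Bool) := rfl
    rw [h]
    cases hp : p a <;> simp [hp, ih]

theorem orR_iff (a b : Bool) : orR a b = true ↔ a = true ∨ b = true := by
  cases a <;> simp [orR]

theorem andR_iff (a b : Bool) : andR a b = true ↔ a = true ∧ b = true := by
  cases a <;> simp [andR]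

theorem force_eq {α : Type} (n : ℕ) (f : ℕ → α) : force n f = f n := by
  cases n <;> rfl

theorem mx_eq (a b : ℕ) : mx a b = max a b := by
  unfold mx
  cases h : Nat.ble a b
  · have : ¬ a ≤ b := by rw [← Nat.ble_eq]; simp [h]
    simp only
    omega
  · have : a ≤ b := Nat.le_of_ble_eq_true h
    simp only
    omega

theorem ks_spec : ∀ x : Fin 5, ∀ k ∈ ks x.val, k ∈ K ∧ inT k x.val = true := by decide +kernel

theorem kk_spec (i j k : ℕ) : k ∈ kk i j ↔ k ∈ K ∧ inT k i = true ∧ inT k j = true := by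
  simp [kk]

section semantics
variable {V : Type} [DecidableEq V] {c : V → V → Fin 5}

/-- `A` contains a set of at least `r` vertices with colors in the `k`-th triple. -/
def Has (c : V → V → Fin 5) (A : Finset V) (k r : ℕ) : Prop :=
  ∃ S ⊆ A, r ≤ S.card ∧ ∀ x ∈ S, ∀ y ∈ S, x ≠ y → inT k (c x y).val = true

theorem Has.mono {A B : Finset V} {k r : ℕ} (h : Has c A k r) (hAB : A ⊆ B) : Has c B k r := by
  obtain ⟨S, h1, h2⟩ := h
  exact ⟨S, h1.trans hAB, h2⟩

theorem Has.le {A : Finset V} {k r s : ℕ} (h : Has c A k r) (hs : s ≤ r) : Has c A k s := by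
  obtain ⟨S, h1, h2, h3⟩ := h
  exact ⟨S, h1, hs.trans h2, h3⟩

theorem Has.one {A : Finset V} (k : ℕ) (h : A.Nonempty) : Has c A k 1 := by
  obtain ⟨a, ha⟩ := h
  refine ⟨{a}, by simpa using ha, by simp, ?_⟩
  intro x hx y hy hxy
  simp only [Finset.mem_singleton] at hx hy
  exact absurd (hx.trans hy.symm) hxy

theorem Has.union (hs : ∀ a b, c a b = c b a) {X Y : Finset V} {k r s : ℕ} (hd : Disjoint X Y)
    (hc : ∀ a ∈ X, ∀ b ∈ Y, inT k (c a b).val = true)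
    (h1 : Has c X k r) (h2 : Has c Y k s) : Has c (X ∪ Y) k (r + s) := by
  obtain ⟨S, a1, a2, a3⟩ := h1
  obtain ⟨T, b1, b2, b3⟩ := h2
  refine ⟨S ∪ T, Finset.union_subset_union a1 b1, ?_, ?_⟩
  · rw [Finset.card_union_of_disjoint (Finset.disjoint_of_subset_left a1
      (Finset.disjoint_of_subset_right b1 hd))]
    omega
  · intro x hx y hy hxy
    rcases Finset.mem_union.1 hx with h | h <;> rcases Finset.mem_union.1 hy with h' | h'
    · exact a3 x h y h' hxy
    · exact hc x (a1 h) y (b1 h')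
    · rw [hs]; exact hc y (a1 h') x (b1 h)
    · exact b3 x h y h' hxy

theorem Has.max {A : Finset V} {k r s : ℕ} (h1 : Has c A k r) (h2 : Has c A k s) :
    Has c A k (mx r s) := by
  rw [mx_eq]
  rcases max_choice r s with h | h <;> rw [h] <;> assumption

theorem Has.succ (hs : ∀ a b, c a b = c b a) {A X : Finset V} {k r : ℕ} {i : Fin 5}
    (hn : HasNbr c A X i) (hX : X ⊆ A) (hi : inT k i.val = true) (h : Has c X k r) :
    Has c A k (Nat.succ r) := by
  obtain ⟨p, p1, p2, p3⟩ := hn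
  have := Has.union hs (Finset.disjoint_singleton_right.2 p2) (k := k)
    (by intro a ha b hb
        rw [Finset.mem_singleton.1 hb, p3 a ha]; exact hi) h (Has.one k (Finset.singleton_nonempty p))
  exact this.mono (Finset.union_subset hX (Finset.singleton_subset_iff.2 p1))

theorem final_sound {A : Finset V} {n : ℕ} {w : ℕ → ℕ} (hno : ∀ k ∈ K, ¬ Has c A k 6)
    (hw : ∀ k ∈ K, Has c A k (w k)) (h : final n w = true) :
    ∃ l ∈ Lst n, ∀ k ∈ K, Has c A k (dg l k) := by
  unfold final at h
  rw [orR_iff, force_eq, anyR_iff, anyR_iff] at h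
  rcases h with ⟨k, hk, h⟩ | ⟨l, hl, h⟩
  · exact absurd ((hw k hk).le (Nat.le_of_ble_eq_true h)) (hno k hk)
  · rw [andR_iff, allR_iff] at h
    exact ⟨l, hl, fun k hk => (hw k hk).le (Nat.le_of_ble_eq_true (h.2 k hk))⟩

theorem join_step (hG : IsGallai c) {A X Y : Finset V} {x : Fin 5} {u v : ℕ}
    (hno : ∀ k ∈ K, ¬ Has c A k 6) (hd : Disjoint X Y) (hU : X ∪ Y = A)
    (hx : ∀ a ∈ X, ∀ b ∈ Y, c a b = x)
    (hu : ∀ k ∈ K, Has c X k (dg u k)) (hv : ∀ k ∈ K, Has c Y k (dg v k))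
    (h : joinOK A.card u v x.val = true) :
    ∃ l ∈ Lst A.card, ∀ k ∈ K, Has c A k (dg l k) := by
  have hX : X ⊆ A := hU ▸ Finset.subset_union_left
  have hY : Y ⊆ A := hU ▸ Finset.subset_union_right
  have hadd : ∀ k ∈ K, inT k x.val = true → Has c A k (Nat.add (dg u k) (dg v k)) := by
    intro k hk hkx
    have := Has.union hG.1 hd (by intro a ha b hb; rw [hx a ha b hb]; exact hkx) (hu k hk) (hv k hk)
    rw [hU] at this
    exact this
  unfold joinOK at h
  rw [orR_iff, anyR_iff] at h
  rcases h with ⟨k, hk, h⟩ | h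
  · obtain ⟨h1, h2⟩ := ks_spec x k hk
    exact absurd ((hadd k h1 h2).le (Nat.le_of_ble_eq_true h)) (hno k h1)
  · refine final_sound hno ?_ h
    intro k hk
    unfold joinW
    cases hkx : inT k x.val
    · exact Has.max ((hu k hk).mono hX) ((hv k hk).mono hY)
    · exact hadd k hk hkx

theorem mem_tagged_acc {q : List ℕ} {n : ℕ} {acc : List (ℕ × ℕ)} {p : ℕ × ℕ} (h : p ∈ acc) :
    p ∈ tagged q n acc := by
  unfold tagged
  induction Lst n with
  | nil => exact h
  | cons a t ih =>
    simp only [consIf]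
    cases allR (fun k => Nat.ble (dg a k) (nat_lit 2)) q
    · exact ih
    · exact List.mem_cons_of_mem _ ih

theorem mem_tagged {q : List ℕ} {n l : ℕ} {acc : List (ℕ × ℕ)} (hl : l ∈ Lst n)
    (h : ∀ k ∈ q, dg l k ≤ 2) : (n, l) ∈ tagged q n acc := by
  unfold tagged
  revert hl
  induction Lst n with
  | nil => intro hl; simp at hl
  | cons a t ih =>
    intro hl
    simp only [consIf]
    rcases List.mem_cons.1 hl with e | e
    · subst e
      have : allR (fun k => Nat.ble (dg l k) (nat_lit 2)) q = true := by
        rw [allR_iff]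
        intro k hk
        exact Nat.ble_eq_true_of_le (h k hk)
      rw [this]
      exact List.mem_cons_self
    · cases allR (fun k => Nat.ble (dg a k) (nat_lit 2)) q
      · exact ih e
      · exact List.mem_cons_of_mem _ (ih e)

theorem mem_small {q : List ℕ} {n l : ℕ} (h1 : 1 ≤ n) (h9 : n ≤ 9) (hl : l ∈ Lst n)
    (h : ∀ k ∈ q, dg l k ≤ 2) : (n, l) ∈ small q := by
  unfold small
  interval_cases n
  · exact mem_tagged hl h
  · exact mem_tagged_acc (mem_tagged hl h)
  · exact mem_tagged_acc (mem_tagged_acc (mem_tagged hl h))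
  · exact mem_tagged_acc (mem_tagged_acc (mem_tagged_acc (mem_tagged hl h)))
  · exact mem_tagged_acc (mem_tagged_acc (mem_tagged_acc (mem_tagged_acc (mem_tagged hl h))))
  all_goals
    iterate 5 apply mem_tagged_acc
  · exact mem_tagged hl h
  · exact mem_tagged_acc (mem_tagged hl h)
  · exact mem_tagged_acc (mem_tagged_acc (mem_tagged hl h))
  · exact mem_tagged_acc (mem_tagged_acc (mem_tagged_acc (mem_tagged hl h)))

theorem quad_step (hG : IsGallai c) {A : Finset V} {i j : Fin 5} (hA : A.card ≤ 10)
    (hno : ∀ k ∈ K, ¬ Has c A k 6)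
    (ih : ∀ B : Finset V, B.card < A.card → B.Nonempty →
      ∃ l ∈ Lst B.card, ∀ k ∈ K, Has c B k (dg l k))
    (hQ : Quad c A i j) (h : quadAll i.val j.val = true) :
    ∃ l ∈ Lst A.card, ∀ k ∈ K, Has c A k (dg l k) := by
  obtain ⟨X, Y, Z, W, nX, nY, nZ, nW, d1, d2, d3, hU, c1, c2, c3, x1, y1, z1, x2, y2, z2⟩ := hQ
  have hs := hG.1
  have hcard : X.card + Y.card + Z.card + W.card = A.card := by
    rw [← hU, Finset.card_union_of_disjoint d3, Finset.card_union_of_disjoint d2,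
      Finset.card_union_of_disjoint d1]
  have pX := nX.card_pos
  have pY := nY.card_pos
  have pZ := nZ.card_pos
  have pW := nW.card_pos
  have sX : X ⊆ A := by rw [← hU]; intro t ht; simp [ht]
  have sY : Y ⊆ A := by rw [← hU]; intro t ht; simp [ht]
  have sZ : Z ⊆ A := by rw [← hU]; intro t ht; simp [ht]
  have sW : W ⊆ A := by rw [← hU]; intro t ht; simp [ht]
  obtain ⟨x, hx, gx⟩ := ih X (by omega) nX
  obtain ⟨y, hy, gy⟩ := ih Y (by omega) nY
  obtain ⟨z, hz, gz⟩ := ih Z (by omega) nZ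
  obtain ⟨t, ht, gt⟩ := ih W (by omega) nW
  have sum : ∀ k ∈ kk i.val j.val, ∀ a b d e, Has c X k a → Has c Y k b → Has c Z k d →
      Has c W k e → Has c A k (a + b + d + e) := by
    intro k hk a b d e h1 h2 h3 h4
    obtain ⟨-, ki, kj⟩ := (kk_spec _ _ _).1 hk
    have conv : ∀ p q, c p q = i ∨ c p q = j → inT k (c p q).val = true := by
      rintro p q (e | e) <;> rw [e] <;> assumption
    have := Has.union hs d3 (fun a ha b hb => conv a b (c3 a ha b hb))
      (Has.union hs d2 (fun a ha b hb => conv a b (c2 a ha b hb))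
        (Has.union hs d1 (fun a ha b hb => conv a b (c1 a ha b hb)) h1 h2) h3) h4
    rw [hU] at this
    exact this
  have sum5 : ∀ k ∈ kk i.val j.val, ∀ a b d e, Has c X k a → Has c Y k b → Has c Z k d →
      Has c W k e → a + b + d + e ≤ 5 := by
    intro k hk a b d e h1 h2 h3 h4
    by_contra hc
    exact hno k ((kk_spec _ _ _).1 hk).1 ((sum k hk a b d e h1 h2 h3 h4).le (by omega))
  have kK : ∀ k ∈ kk i.val j.val, k ∈ K := fun k hk => ((kk_spec _ _ _).1 hk).1
  have bx : ∀ k ∈ kk i.val j.val, dg x k ≤ 2 := by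
    intro k hk
    have := sum5 k hk _ _ _ _ (gx k (kK k hk)) (.one k nY) (.one k nZ) (.one k nW)
    omega
  have bY : ∀ k ∈ kk i.val j.val, dg y k ≤ 2 := by
    intro k hk
    have := sum5 k hk _ _ _ _ (.one k nX) (gy k (kK k hk)) (.one k nZ) (.one k nW)
    omega
  have bz : ∀ k ∈ kk i.val j.val, dg z k ≤ 2 := by
    intro k hk
    have := sum5 k hk _ _ _ _ (.one k nX) (.one k nY) (gz k (kK k hk)) (.one k nW)
    omega
  have bt : ∀ k ∈ kk i.val j.val, dg t k ≤ 2 := by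
    intro k hk
    have := sum5 k hk _ _ _ _ (.one k nX) (.one k nY) (.one k nZ) (gt k (kK k hk))
    omega
  unfold quadAll quadL at h
  rw [allR_iff] at h
  replace h := h _ (mem_small (by omega) (by omega) hx bx)
  rw [allR_iff] at h
  replace h := h _ (mem_small (by omega) (by omega) hy bY)
  rw [orR_iff, anyR_iff] at h
  rcases h with ⟨k, hk, h⟩ | h
  · exfalso
    have h' : 4 ≤ dg x k + dg y k := Nat.le_of_ble_eq_true h
    have := sum5 k hk _ _ _ _ (gx k (kK k hk)) (gy k (kK k hk)) (.one k nZ) (.one k nW)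
    omega
  rw [allR_iff] at h
  replace h := h _ (mem_small (by omega) (by omega) hz bz)
  rw [orR_iff, anyR_iff] at h
  rcases h with ⟨k, hk, h⟩ | h
  · exfalso
    have h' : 5 ≤ dg x k + dg y k + dg z k := Nat.le_of_ble_eq_true h
    have := sum5 k hk _ _ _ _ (gx k (kK k hk)) (gy k (kK k hk)) (gz k (kK k hk)) (.one k nW)
    omega
  rw [allR_iff] at h
  replace h := h _ (mem_small (by omega) (by omega) ht bt)
  unfold quadOK at h
  rw [orR_iff, anyR_iff, orR_iff] at h
  rcases h with ⟨k, hk, h⟩ | h | h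
  · exfalso
    have h' : 6 ≤ dg x k + dg y k + dg z k + dg t k := Nat.le_of_ble_eq_true h
    have := sum5 k hk _ _ _ _ (gx k (kK k hk)) (gy k (kK k hk)) (gz k (kK k hk)) (gt k (kK k hk))
    omega
  · exfalso
    have h' : 11 ≤ X.card + Y.card + Z.card + W.card := Nat.le_of_ble_eq_true h
    omega
  simp only [hcard] at h
  refine final_sound hno ?_ h
  intro k hk
  have hX := gx k hk
  have hY := gy k hk
  have hZ := gz k hk
  have hW := gt k hk
  have hsucc : ∀ m : Fin 5, inT k m.val = true → HasNbr c A X m → HasNbr c A Y m →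
      HasNbr c A Z m → Has c A k (mx (Nat.succ (mx (mx (dg x k) (dg y k)) (dg z k))) (dg t k)) := by
    intro m hm n1 n2 n3
    refine Has.max ?_ (hW.mono sW)
    have e : Nat.succ (mx (mx (dg x k) (dg y k)) (dg z k)) =
        mx (mx (Nat.succ (dg x k)) (Nat.succ (dg y k))) (Nat.succ (dg z k)) := by
      simp only [mx_eq]; omega
    rw [e]
    exact ((Has.succ hs n1 sX hm hX).max (Has.succ hs n2 sY hm hY)).max (Has.succ hs n3 sZ hm hZ)
  unfold quadW
  cases ki : inT k i.val <;> cases kj : inT k j.val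
  · exact (((hX.mono sX).max (hY.mono sY)).max (hZ.mono sZ)).max (hW.mono sW)
  · exact hsucc j kj x2 y2 z2
  · exact hsucc i ki x1 y1 z1
  · exact sum k ((kk_spec _ _ _).2 ⟨hk, ki, kj⟩) _ _ _ _ hX hY hZ hW

theorem join_check (n a : ℕ) (h2 : 2 ≤ n) (h10 : n ≤ 10) (h1 : 1 ≤ a) (ha : a ≤ n / 2) :
    joinAll n a (n - a) = true := by
  have ha' : a ∈ List.range' 1 (n / 2) := by
    rw [List.mem_range'_1]; omega
  have A := join_check_a
  have B := join_check_b
  rw [allR_iff] at A B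
  by_cases h : n ≤ 7
  · have := A n (by interval_cases n <;> simp)
    rw [allR_iff] at this
    exact this a ha'
  · have := B n (by interval_cases n <;> simp at h ⊢)
    rw [allR_iff] at this
    exact this a ha'

theorem Quad.symm' {A : Finset V} {i j : Fin 5} (h : Quad c A i j) : Quad c A j i := by
  obtain ⟨X, Y, Z, W, nX, nY, nZ, nW, d1, d2, d3, hU, c1, c2, c3, x1, y1, z1, x2, y2, z2⟩ := h
  exact ⟨X, Y, Z, W, nX, nY, nZ, nW, d1, d2, d3, hU, fun a ha b hb => (c1 a ha b hb).symm,
    fun a ha b hb => (c2 a ha b hb).symm, fun a ha b hb => (c3 a ha b hb).symm,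
    x2, y2, z2, x1, y1, z1⟩

theorem quad_check' (i j : Fin 5) (h : i < j) : quadAll i.val j.val = true := by
  have Q := quad_check
  rw [allR_iff] at Q
  apply Q (i.val, j.val)
  revert i j
  decide

theorem L1_spec : ∃ l ∈ L1, ∀ k ∈ K, dg l k ≤ 1 := by decide +kernel

theorem main_step [Fintype V] (hG : IsGallai c) (hV : Fintype.card V ≤ 10)
    (hno' : ∀ k ∈ K, ¬ Has c Finset.univ k 6) (N : ℕ) : ∀ A : Finset V, A.card = N →
    A.Nonempty → ∃ l ∈ Lst A.card, ∀ k ∈ K, Has c A k (dg l k) := by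
  induction N using Nat.strong_induction_on with
  | _ N IH =>
    intro A hN hne
    have hA : A.card ≤ 10 := (Finset.card_le_univ A).trans hV
    have hno : ∀ k ∈ K, ¬ Has c A k 6 := fun k hk h => hno' k hk (h.mono (Finset.subset_univ A))
    have ih : ∀ B : Finset V, B.card < A.card → B.Nonempty →
        ∃ l ∈ Lst B.card, ∀ k ∈ K, Has c B k (dg l k) :=
      fun B hB hn => IH B.card (hN ▸ hB) B rfl hn
    by_cases h2 : 2 ≤ A.card
    · rcases dichotomy hG A h2 with hM | ⟨i, j, hij, hQ⟩
      · have key : ∀ X Y : Finset V, ∀ x : Fin 5, X.Nonempty → Y.Nonempty → Disjoint X Y →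
            X ∪ Y = A → (∀ a ∈ X, ∀ b ∈ Y, c a b = x) → X.card ≤ Y.card →
            ∃ l ∈ Lst A.card, ∀ k ∈ K, Has c A k (dg l k) := by
          intro X Y x nX nY hd hU hx hle
          have hcard : X.card + Y.card = A.card := by
            rw [← hU, Finset.card_union_of_disjoint hd]
          have pX := nX.card_pos
          have pY := nY.card_pos
          obtain ⟨u, hu, gu⟩ := ih X (by omega) nX
          obtain ⟨v, hv, gv⟩ := ih Y (by omega) nY
          have hj := join_check A.card X.card h2 hA pX (by omega)
          have e : A.card - X.card = Y.card := by omega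
          rw [e] at hj
          unfold joinAll at hj
          rw [allR_iff] at hj
          replace hj := hj u hu
          rw [allR_iff] at hj
          replace hj := hj v hv
          rw [allR_iff] at hj
          replace hj := hj x.val (by clear hx; revert x; decide)
          exact join_step hG hno hd hU hx gu gv hj
        obtain ⟨X, Y, x, nX, nY, hd, hU, hx⟩ := hM
        rcases le_total X.card Y.card with h | h
        · exact key X Y x nX nY hd hU hx h
        · exact key Y X x nY nX hd.symm (by rw [Finset.union_comm, hU])
            (fun a ha b hb => by rw [hG.1]; exact hx b hb a ha) h
      · rcases lt_or_gt_of_ne hij with h | h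
        · exact quad_step hG hA hno ih hQ (quad_check' i j h)
        · exact quad_step hG hA hno ih hQ.symm' (quad_check' j i h)
    · have h1 : A.card = 1 := by have := hne.card_pos; omega
      rw [h1]
      obtain ⟨l, hl, hk⟩ := L1_spec
      exact ⟨l, hl, fun k hkK => (Has.one k hne).le (hk k hkK)⟩

end semantics

theorem inT_card : ∀ k ∈ K, (Finset.univ.filter fun x : Fin 5 => inT k x.val = true).card ≤ 3 := by
  decide +kernel

theorem upper (c : Fin 10 → Fin 10 → Fin 5) (hG : IsGallai c) :
    ∃ S : Finset (Fin 10), S.card = 6 ∧ (colorsOn c S).card ≤ 3 := by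
  by_cases hno : ∀ k ∈ K, ¬ Has c Finset.univ k 6
  · obtain ⟨l, hl, -⟩ := main_step hG (by simp) hno 10 Finset.univ (by simp) ⟨0, by simp⟩
    simp [Lst] at hl
  · push Not at hno
    obtain ⟨k, hk, S, -, h6, hS⟩ := hno
    obtain ⟨T, hT, hc⟩ := Finset.exists_subset_card_eq h6
    refine ⟨T, hc, (Finset.card_le_card ?_).trans (inT_card k hk)⟩
    intro x hx
    simp only [colorsOn, Finset.mem_image, Finset.mem_filter, Finset.mem_product] at hx
    obtain ⟨p, ⟨⟨h1, h2⟩, h3⟩, rfl⟩ := hx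
    simp only [Finset.mem_filter, Finset.mem_univ, true_and]
    exact hS _ (hT h1) _ (hT h2) h3

/-- The extremal coloring on nine vertices. -/
def c9 (a b : Fin 9) : Fin 5 :=
  (![![0, 0, 2, 2, 4, 4, 4, 4, 4], ![0, 0, 2, 2, 4, 4, 4, 4, 4], ![2, 2, 0, 1, 4, 4, 4, 4, 4],
    ![2, 2, 1, 0, 4, 4, 4, 4, 4], ![4, 4, 4, 4, 0, 2, 3, 3, 3], ![4, 4, 4, 4, 2, 0, 3, 3, 3],
    ![4, 4, 4, 4, 3, 3, 0, 1, 1], ![4, 4, 4, 4, 3, 3, 1, 0, 0],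
    ![4, 4, 4, 4, 3, 3, 1, 0, 0]] : Fin 9 → Fin 9 → Fin 5) a b

theorem c9_gallai : IsGallai c9 := by
  unfold IsGallai
  decide +kernel

theorem c9_all : ∀ S ∈ Finset.powersetCard 6 (Finset.univ : Finset (Fin 9)),
    4 ≤ (colorsOn c9 S).card := by
  decide +kernel

theorem lower (S : Finset (Fin 9)) (h : S.card = 6) : 4 ≤ (colorsOn c9 S).card :=
  c9_all S (by simp [Finset.mem_powersetCard, h])

theorem gallaiNum_five_three_six :
    gallaiNum 5 3 6 = 10 ∧
    (∀ c : Fin 10 → Fin 10 → Fin 5, IsGallai c →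
      ∃ S : Finset (Fin 10), S.card = 6 ∧ (colorsOn c S).card ≤ 3) ∧
    (∃ c : Fin 9 → Fin 9 → Fin 5, IsGallai c ∧
      ∀ S : Finset (Fin 9), S.card = 6 → 4 ≤ (colorsOn c S).card) := by
  refine ⟨?_, upper, c9, c9_gallai, lower⟩
  unfold gallaiNum
  apply le_antisymm
  · exact Nat.sInf_le ⟨by norm_num, upper⟩
  · refine le_csInf ⟨10, by norm_num, upper⟩ ?_
    rintro n ⟨-, hn⟩
    by_contra hlt
    have h9 : n ≤ 9 := by omega
    let f : Fin n → Fin 9 := Fin.castLE h9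
    have hf : Function.Injective f := Fin.castLE_injective h9
    obtain ⟨S, hS, hq⟩ := hn (fun a b => c9 (f a) (f b))
      ⟨fun a b => c9_gallai.1 _ _, fun a b d h1 h2 h3 =>
        c9_gallai.2 _ _ _ (hf.ne h1) (hf.ne h2) (hf.ne h3)⟩
    have h4 := lower (S.image f) (by rw [Finset.card_image_of_injective S hf, hS])
    have hsub : colorsOn c9 (S.image f) ⊆ colorsOn (fun a b => c9 (f a) (f b)) S := by
      intro x hx
      simp only [colorsOn, Finset.mem_image, Finset.mem_filter, Finset.mem_product] at hx ⊢
      obtain ⟨⟨p, q⟩, ⟨⟨⟨a, ha, h1⟩, ⟨b, hb, h2⟩⟩, h3⟩, h5⟩ := hx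
      refine ⟨(a, b), ⟨⟨ha, hb⟩, ?_⟩, ?_⟩
      · rintro h
        apply h3
        simp only at h h1 h2 ⊢
        rw [← h1, ← h2, h]
      · simp only at h1 h2 h5 ⊢
        rw [h1, h2, h5]
    have := Finset.card_le_card hsub
    omega
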